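/- arXiv:1402.1875 — 2 statements merged into one kernel-verified Lean document; each statement's English description precedes it below -/
import Mathlib

section
/- If X is a metric ANR, then cat_g X = cat X: the least n such that X is covered by n+1 arbitrary subsets each contractible in X equals the least n such that X is covered by n+1 open subsets each contractible in X (both taken to be ∞ if no such n exists). -/
universe u

/-- A metrizable topological space `K` is a *metric ANR* if for every metrizable space `Z`
and every closed embedding `e : K → Z`, some open neighborhood of the image of `e` in `Z`
retracts onto the image of `e`. -/
def IsMetricANR (K : Type u) [TopologicalSpace K] : Prop :=
  TopologicalSpace.MetrizableSpace K ∧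
  ∀ (Z : Type u) [TopologicalSpace Z], TopologicalSpace.MetrizableSpace Z →
    ∀ e : K → Z, Topology.IsClosedEmbedding e →
      ∃ (U : Set Z), IsOpen U ∧ Set.range e ⊆ U ∧
        ∃ r : C(U, Z), (∀ u : U, r u ∈ Set.range e) ∧
          ∀ (k : K) (h : e k ∈ U), r ⟨e k, h⟩ = e k

/-- A subset `A` of `X` is *contractible in `X`* if the inclusion `A ↪ X` is nullhomotopic,
i.e. the restriction of the identity map of `X` to `A` is nullhomotopic. -/
def ContractibleIn {X : Type*} [TopologicalSpace X] (A : Set X) : Prop :=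
  ((ContinuousMap.id X).restrict A).Nullhomotopic

/-- The generalized LS-category `cat_g X` of a space `X`: the least `n ∈ ℕ∞` such that `X` is
covered by `n + 1` arbitrary subsets, each contractible in `X` (and `∞` if none exists). -/
noncomputable def catgSpace (X : Type*) [TopologicalSpace X] : ℕ∞ :=
  sInf {n : ℕ∞ | ∃ m : ℕ, n = (m : ℕ∞) ∧ ∃ A : Fin (m + 1) → Set X,
    (∀ x, ∃ i, x ∈ A i) ∧ ∀ i, ContractibleIn (A i)}

/-- The (classical) LS-category `cat X` of a space `X`: the least `n ∈ ℕ∞` such that `X` is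
covered by `n + 1` *open* subsets, each contractible in `X` (and `∞` if none exists). -/
noncomputable def catSpace (X : Type*) [TopologicalSpace X] : ℕ∞ :=
  sInf {n : ℕ∞ | ∃ m : ℕ, n = (m : ℕ∞) ∧ ∃ A : Fin (m + 1) → Set X,
    (∀ x, ∃ i, x ∈ A i) ∧ ∀ i, IsOpen (A i) ∧ ContractibleIn (A i)}

/-! The idea is to extend a contraction of `A` over an open neighborhood of `A` by averaging it with
a partition of unity. To be able to average, realize `X` as a closed subset of a convex set `Z` of a
normed space: the ANR property gives a retraction onto `X` of a relatively open `Z ∩ V`. The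
contraction of `A` becomes a map from `A` to paths in `Z ∩ V`. Averages of nearby paths still lie in
`Z ∩ V`, still end at the same point, and start so close to the point they are attached to that the
straight segment stays in `Z ∩ V`. Retracting to `X`, the segment followed by the path contracts an
open neighborhood of `A`. Hence each member of a cover can be enlarged to an open one. -/

open Filter Set Topology TopologicalSpace unitInterval
open scoped BoundedContinuousFunction

section TruncatedDistance

variable {X : Type*} [PseudoMetricSpace X]

/-- The bounded continuous function `y ↦ min (dist x y) 1`. Truncation lets `truncDist` embed a
possibly unbounded metric space `X` into the normed space `X →ᵇ ℝ`. -/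
noncomputable def truncDist (x : X) : X →ᵇ ℝ :=
  .ofNormedAddCommGroup (fun y ↦ min (dist x y) 1) (by fun_prop) 1 fun y ↦ by
    rw [Real.norm_of_nonneg (by positivity)]
    exact min_le_right _ _

@[simp]
lemma truncDist_apply (x y : X) : truncDist x y = min (dist x y) 1 := rfl

lemma truncDist_nonneg (x y : X) : 0 ≤ truncDist x y := by
  rw [truncDist_apply]
  positivity

lemma lipschitzWith_truncDist : LipschitzWith 1 (truncDist : X → X →ᵇ ℝ) := by
  refine .of_dist_le_mul fun x x' ↦ ?_
  rw [NNReal.coe_one, one_mul, BoundedContinuousFunction.dist_le dist_nonneg]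
  intro y
  calc dist (truncDist x y) (truncDist x' y)
      ≤ max |dist x y - dist x' y| |(1 : ℝ) - 1| := abs_min_sub_min_le_max _ _ _ _
    _ ≤ dist x x' := by simpa using abs_dist_sub_le x x' y

variable (X) in
/-- The functions dominating a positive multiple of some `truncDist x`. This is a convex set in
which the image of `truncDist` is closed, although it need not be closed in `X →ᵇ ℝ`. -/
def truncDistCone : ConvexCone ℝ (X →ᵇ ℝ) where
  carrier := {z | ∃ x : X, ∃ c : ℝ, 0 < c ∧ ∀ y, c * truncDist x y ≤ z y}
  smul_mem' := by
    rintro a ha z ⟨x, c, hc, hz⟩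
    refine ⟨x, a * c, mul_pos ha hc, fun y ↦ ?_⟩
    rw [mul_assoc]
    exact mul_le_mul_of_nonneg_left (hz y) ha.le
  add_mem' := by
    rintro z ⟨x, c, hc, hz⟩ w ⟨x', c', hc', hw⟩
    have hw_nonneg (y : X) : 0 ≤ w y := (mul_nonneg hc'.le (truncDist_nonneg x' y)).trans (hw y)
    exact ⟨x, c, hc, fun y ↦ (hz y).trans (le_add_of_nonneg_right (hw_nonneg y))⟩

lemma truncDist_mem_truncDistCone (x : X) : truncDist x ∈ truncDistCone X :=
  ⟨x, 1, one_pos, fun _ ↦ (one_mul _).le⟩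

lemma mul_truncDist_le_dist {z : X →ᵇ ℝ} {x : X} {c : ℝ} (hz : ∀ y, c * truncDist x y ≤ z y)
    (y : X) : c * truncDist x y ≤ dist z (truncDist y) :=
  calc c * truncDist x y ≤ z y := hz y
    _ ≤ dist (z y) (truncDist y y) := by simpa [Real.dist_eq] using le_abs_self (z y)
    _ ≤ dist z (truncDist y) := BoundedContinuousFunction.dist_coe_le_dist y

lemma tendsto_of_tendsto_truncDist {ι : Type*} {l : Filter ι} {u : ι → X} {z : X →ᵇ ℝ} {x : X}
    {c : ℝ} (hc : 0 < c) (hz : ∀ y, c * truncDist x y ≤ z y)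
    (hu : Tendsto (fun i ↦ truncDist (u i)) l (𝓝 z)) : Tendsto u l (𝓝 x) := by
  refine Metric.tendsto_nhds.2 fun ε hε ↦ ?_
  filter_upwards [Metric.tendsto_nhds.1 hu (c * min ε 1) (by positivity)] with i hi
  rw [dist_comm] at hi ⊢
  have hlt : truncDist x (u i) < min ε 1 :=
    lt_of_mul_lt_mul_left ((mul_truncDist_le_dist hz (u i)).trans_lt hi) hc.le
  rw [truncDist_apply] at hlt
  exact lt_of_not_ge fun hle ↦ hlt.not_ge (min_le_min_right 1 hle)

lemma isInducing_truncDist : IsInducing (truncDist : X → X →ᵇ ℝ) := by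
  refine isInducing_iff_nhds.2 fun x ↦ le_antisymm ?_ ?_
  · exact (lipschitzWith_truncDist.continuous.tendsto x).le_comap
  · exact tendsto_of_tendsto_truncDist one_pos (fun _ ↦ (one_mul _).le) tendsto_comap

lemma isClosedEmbedding_truncDist (X : Type*) [MetricSpace X] :
    IsClosedEmbedding fun x : X ↦
      (⟨truncDist x, truncDist_mem_truncDistCone x⟩ : truncDistCone X) := by
  refine ⟨(isInducing_truncDist.codRestrict truncDist_mem_truncDistCone).isEmbedding, ?_⟩
  refine isClosed_of_closure_subset ?_
  rintro ⟨z, x, c, hc, hz⟩ hcl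
  obtain ⟨w, hw, hwz⟩ := mem_closure_iff_seq_limit.1 hcl
  choose u hu using hw
  obtain rfl : (fun n ↦ ⟨truncDist (u n), truncDist_mem_truncDistCone (u n)⟩) = w := funext hu
  have htruncDist : Tendsto (fun n ↦ truncDist (u n)) atTop (𝓝 z) := tendsto_subtype_rng.1 hwz
  have hux : Tendsto u atTop (𝓝 x) := tendsto_of_tendsto_truncDist hc hz htruncDist
  exact ⟨x, Subtype.ext <| tendsto_nhds_unique
    ((lipschitzWith_truncDist.continuous.tendsto x).comp hux) htruncDist⟩

end TruncatedDistance

lemma IsMetricANR.exists_convex_leftInverse {X : Type u} [TopologicalSpace X]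
    (hX : IsMetricANR X) :
    ∃ Z V : Set (X →ᵇ ℝ), Convex ℝ Z ∧ IsOpen V ∧
      ∃ (e : C(X, ↥(Z ∩ V))) (r : C(↥(Z ∩ V), X)), Function.LeftInverse r e := by
  obtain ⟨_, hX⟩ := hX
  let : MetricSpace X := metrizableSpaceMetric X
  have he := isClosedEmbedding_truncDist X
  obtain ⟨W, hW, hXW, r, hr, hre⟩ := hX (truncDistCone X) inferInstance _ he
  obtain ⟨V, hV, rfl⟩ := isOpen_induced_iff.1 hW
  let φ := he.isEmbedding.toHomeomorph
  refine ⟨truncDistCone X, V, (truncDistCone X).convex, hV,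
    ⟨fun x ↦ ⟨truncDist x, truncDist_mem_truncDistCone x, hXW ⟨x, rfl⟩⟩,
      lipschitzWith_truncDist.continuous.subtype_mk _⟩,
    ⟨fun z ↦ φ.symm ⟨r ⟨⟨z, z.2.1⟩, z.2.2⟩, hr _⟩, by fun_prop⟩, fun x ↦ ?_⟩
  exact (φ.symm_apply_eq).2 (Subtype.ext (hre x (hXW ⟨x, rfl⟩)))

section Averaging

lemma exists_forall_lt_two_mul {S : Set ℝ} (hS : BddAbove S) {s₀ : ℝ} (hs₀ : s₀ ∈ S)
    (hpos : 0 < s₀) : ∃ s ∈ S, ∀ t ∈ S, t < 2 * s := by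
  have hsup : 0 < sSup S := hpos.trans_le (le_csSup hS hs₀)
  obtain ⟨s, hs, hlt⟩ := exists_lt_of_lt_csSup ⟨s₀, hs₀⟩ (half_lt_self hsup)
  exact ⟨s, hs, fun t ht ↦ by linarith [le_csSup hS ht]⟩

variable {X F : Type*} [AddCommGroup F] [Module ℝ F] [TopologicalSpace F]

lemma exists_ball_prod_convex_subset [PseudoMetricSpace X] [LocallyConvexSpace ℝ F]
    {A : Set X} (h : C(A, F)) {O : Set (X × F)} (hO : IsOpen O) (a : A)
    (ha : ((a : X), h a) ∈ O) :
    ∃ δ > 0, δ ≤ 1 ∧ ∃ C : Set F, Convex ℝ C ∧ Metric.ball (a : X) δ ×ˢ C ⊆ O ∧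
      ∀ a' : A, dist a' a < 3 * δ → h a' ∈ C := by
  obtain ⟨N, hN, M, hM, hNM⟩ := mem_nhds_prod_iff.1 (hO.mem_nhds ha)
  obtain ⟨C, ⟨hC, hC_conv⟩, hCM⟩ := (LocallyConvexSpace.convex_basis (𝕜 := ℝ) (h a)).mem_iff.1 hM
  obtain ⟨ε, hε, hεN⟩ := Metric.mem_nhds_iff.1 hN
  obtain ⟨η, hη, hηC⟩ := Metric.mem_nhds_iff.1 (h.continuous.continuousAt hC)
  refine ⟨min 1 (min ε (η / 3)), by positivity, min_le_left _ _, C, hC_conv, ?_, fun a' ha' ↦ ?_⟩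
  · exact (Set.prod_mono ((Metric.ball_subset_ball (by simp)).trans hεN) hCM).trans hNM
  · have : min 1 (min ε (η / 3)) ≤ η / 3 := by simp
    exact hηC (Metric.mem_ball.2 (by linarith))

theorem exists_isOpen_continuousMap_graph_mem [TopologicalSpace X] [PseudoMetrizableSpace X]
    [ContinuousAdd F] [ContinuousSMul ℝ F] [LocallyConvexSpace ℝ F] {A : Set X}
    (h : C(A, F)) {O : Set (X × F)} (hO : IsOpen O) (hAO : ∀ a : A, ((a : X), h a) ∈ O) :
    ∃ U, IsOpen U ∧ A ⊆ U ∧ ∃ Φ : C(U, F),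
      ∀ x, Φ x ∈ convexHull ℝ (range h) ∧ ((x : X), Φ x) ∈ O := by
  let : PseudoMetricSpace X := pseudoMetrizableSpacePseudoMetric X
  choose δ hδ hδ1 C hC_conv hCO hhC using fun a ↦ exists_ball_prod_convex_subset h hO a (hAO a)
  let near (x : X) : Set A := {a | dist x a < δ a}
  let U : Set X := {x | (near x).Nonempty}
  have hU : IsOpen U := by
    have : U = ⋃ a : A, Metric.ball (a : X) (δ a) := by ext; simp [U, near, Set.Nonempty]
    exact this ▸ isOpen_iUnion fun a ↦ Metric.isOpen_ball
  obtain ⟨Φ, hΦ⟩ : ∃ Φ : C(U, F), ∀ x : U, Φ x ∈ convexHull ℝ (h '' near x) := by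
    refine exists_continuous_forall_mem_convex_of_local_const (fun x ↦ convex_convexHull ℝ _) ?_
    rintro ⟨x, a, ha⟩
    have hnear : ∀ᶠ y : U in 𝓝 ⟨x, a, ha⟩, a ∈ near y :=
      ((continuous_subtype_val.dist continuous_const).tendsto _).eventually_lt_const ha
    exact ⟨h a, hnear.mono fun y hy ↦ subset_convexHull ℝ _ ⟨a, hy, rfl⟩⟩
  refine ⟨U, hU, fun a ha ↦ ⟨⟨a, ha⟩, by simpa [near] using hδ ⟨a, ha⟩⟩, Φ, fun x ↦
    ⟨convexHull_mono (image_subset_range _ _) (hΦ x), ?_⟩⟩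
  -- The point with almost the largest radius has all the other nearby points within its reach.
  obtain ⟨_, ⟨a, hxa, rfl⟩, hmax⟩ : ∃ s ∈ δ '' near x, ∀ t ∈ δ '' near x, t < 2 * s := by
    obtain ⟨a₀, ha₀⟩ := x.2
    exact exists_forall_lt_two_mul ⟨1, forall_mem_image.2 fun a _ ↦ hδ1 a⟩
      (mem_image_of_mem δ ha₀) (hδ a₀)
  have hnearC : h '' near x ⊆ C a := by
    rintro _ ⟨a', hxa', rfl⟩
    refine hhC a a' ?_
    calc dist (a' : X) a ≤ dist (x : X) a' + dist (x : X) a := dist_triangle_left _ _ _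
      _ < δ a' + δ a := add_lt_add hxa' hxa
      _ < 3 * δ a := by linarith [hmax _ ⟨a', hxa', rfl⟩]
  exact hCO a ⟨hxa, convexHull_min hnearC (hC_conv a) (hΦ x)⟩

end Averaging

section Contraction

lemma nullhomotopic_of_leftInverse_comp {X Y W : Type*} [TopologicalSpace X] [TopologicalSpace Y]
    [TopologicalSpace W] {f : C(Y, X)} {e : C(X, W)} {r : C(W, X)}
    (hr : Function.LeftInverse r e) (hf : (e.comp f).Nullhomotopic) : f.Nullhomotopic := by
  have hrf : r.comp (e.comp f) = f := ContinuousMap.ext fun y ↦ hr (f y)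
  exact hrf ▸ hf.comp_right r

variable {E : Type*} [AddCommGroup E] [Module ℝ E] [TopologicalSpace E] [IsTopologicalAddGroup E]
  [ContinuousSMul ℝ E]

lemma isOpen_setOf_segment_subset {V : Set E} (hV : IsOpen V) :
    IsOpen {p : E × E | segment ℝ p.1 p.2 ⊆ V} := by
  have hcont : Continuous fun p : E × E ↦ (Path.segment p.1 p.2 : C(I, E)) :=
    ContinuousMap.continuous_of_continuous_uncurry _ <|
      (ContinuousMap.Homotopy.affine .fst .snd).continuous.comp continuous_swap
  simpa [Path.range_segment] using (ContinuousMap.isOpen_setOfPred_range_subset hV).preimage hcont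

lemma homotopic_of_segment_subset {Y : Type*} [TopologicalSpace Y] {W : Set E} (f g : C(Y, W))
    (hfg : ∀ y, segment ℝ (f y : E) (g y) ⊆ W) : f.Homotopic g := by
  let L := ContinuousMap.Homotopy.affine (ContinuousMap.comp ⟨Subtype.val, by fun_prop⟩ f)
    (ContinuousMap.comp ⟨Subtype.val, by fun_prop⟩ g)
  have hL (p : I × Y) : L p ∈ W :=
    hfg p.2 (by rw [← Path.range_segment]; exact mem_range_self p.1)
  exact ⟨{  toFun := fun p ↦ ⟨L p, hL p⟩
            continuous_toFun := by fun_prop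
            map_zero_left := fun y ↦ Subtype.ext (L.map_zero_left y)
            map_one_left := fun y ↦ Subtype.ext (L.map_one_left y) }⟩

lemma nullhomotopic_of_continuousMap_path {Y : Type*} [TopologicalSpace Y] {W : Set E}
    (f : C(Y, W)) (Φ : C(Y, C(I, E))) (w : W) (hΦW : ∀ y, range (Φ y) ⊆ W)
    (hΦ_zero : ∀ y, segment ℝ (f y : E) (Φ y 0) ⊆ W) (hΦ_one : ∀ y, Φ y 1 = w) :
    f.Nullhomotopic := by
  let Ψ : C(I × Y, W) := ⟨fun p ↦ ⟨Φ p.2 p.1, hΦW p.2 (mem_range_self p.1)⟩, by fun_prop⟩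
  let g : C(Y, W) := Ψ.comp ⟨fun y ↦ (0, y), by fun_prop⟩
  have hfg : f.Homotopic g := homotopic_of_segment_subset f g hΦ_zero
  have hgw : g.Homotopic (.const Y w) :=
    ⟨{  toContinuousMap := Ψ
        map_zero_left := fun _ ↦ rfl
        map_one_left := fun y ↦ Subtype.ext (hΦ_one y) }⟩
  exact ⟨w, hfg.trans hgw⟩

lemma ContractibleIn.exists_isOpen_superset [LocallyConvexSpace ℝ E] {X : Type*}
    [TopologicalSpace X] [PseudoMetrizableSpace X] {Z V : Set E} (hZ : Convex ℝ Z) (hV : IsOpen V)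
    (e : C(X, ↥(Z ∩ V))) (r : C(↥(Z ∩ V), X)) (hr : Function.LeftInverse r e) {A : Set X}
    (hA : ContractibleIn A) : ∃ U, A ⊆ U ∧ IsOpen U ∧ ContractibleIn U := by
  obtain ⟨x₀, ⟨H⟩⟩ := hA
  let h : C(A, C(I, E)) := .curry ⟨fun p ↦ e (H (p.2, p.1)), by fun_prop⟩
  have h_zero (a : A) : h a 0 = e a := congrArg (fun x ↦ (e x : E)) (H.apply_zero a)
  have h_one (a : A) : h a 1 = e x₀ := congrArg (fun x ↦ (e x : E)) (H.apply_one a)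
  let O : Set (X × C(I, E)) := {p | range p.2 ⊆ V ∧ segment ℝ (e p.1 : E) (p.2 0) ⊆ V}
  have hO : IsOpen O :=
    ((ContinuousMap.isOpen_setOfPred_range_subset hV).preimage continuous_snd).inter
      ((isOpen_setOf_segment_subset hV).preimage
        (f := fun p : X × C(I, E) ↦ ((e p.1 : E), p.2 0)) (by fun_prop))
  have hAO (a : A) : ((a : X), h a) ∈ O :=
    ⟨range_subset_iff.2 fun t ↦ (e (H (t, a))).2.2, by simp [h_zero, (e a).2.2]⟩
  obtain ⟨U, hU, hAU, Φ, hΦ⟩ := exists_isOpen_continuousMap_graph_mem h hO hAO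
  have hΦ_mem (x : U) : (∀ t, Φ x t ∈ Z) ∧ Φ x 1 = e x₀ := by
    have hconv : Convex ℝ {f : C(I, E) | (∀ t, f t ∈ Z) ∧ f 1 ∈ ({(e x₀ : E)} : Set E)} :=
      fun f hf g hg a b ha hb hab ↦
        ⟨fun t ↦ hZ (hf.1 t) (hg.1 t) ha hb hab,
          convex_singleton _ hf.2 hg.2 ha hb hab⟩
    refine convexHull_min ?_ hconv (hΦ x).1
    rintro _ ⟨a, rfl⟩
    exact ⟨fun t ↦ (e (H (t, a))).2.1, h_one a⟩
  have hnull : (e.comp ((ContinuousMap.id X).restrict U)).Nullhomotopic :=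
    nullhomotopic_of_continuousMap_path _ Φ (e x₀)
      (fun x ↦ subset_inter (range_subset_iff.2 (hΦ_mem x).1) (hΦ x).2.1)
      (fun x ↦ subset_inter (hZ.segment_subset (e x).2.1 ((hΦ_mem x).1 0)) (hΦ x).2.2)
      (fun x ↦ (hΦ_mem x).2)
  exact ⟨U, hAU, hU, nullhomotopic_of_leftInverse_comp hr hnull⟩

end Contraction

lemma catgSpace_eq_catSpace_of_forall_exists_isOpen {X : Type*} [TopologicalSpace X]
    (hX : ∀ A : Set X, ContractibleIn A → ∃ U, A ⊆ U ∧ IsOpen U ∧ ContractibleIn U) :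
    catgSpace X = catSpace X := by
  refine congrArg sInf (Set.ext fun n ↦ ⟨?_, ?_⟩)
  · rintro ⟨m, hn, A, hcover, hA⟩
    choose U hAU hU using fun i ↦ hX (A i) (hA i)
    exact ⟨m, hn, U, fun x ↦ (hcover x).imp fun i hi ↦ hAU i hi, hU⟩
  · rintro ⟨m, hn, A, hcover, hA⟩
    exact ⟨m, hn, A, hcover, fun i ↦ (hA i).2⟩

/-- If `X` is a metric ANR, then `cat_g X = cat X`. -/
theorem catgSpace_eq_catSpace_of_ANR {X : Type u} [TopologicalSpace X]
    (hX : IsMetricANR X) : catgSpace X = catSpace X := by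
  have := hX.1
  obtain ⟨Z, V, hZ, hV, e, r, hr⟩ := hX.exists_convex_leftInverse
  exact catgSpace_eq_catSpace_of_forall_exists_isOpen fun A hA ↦
    hA.exists_isOpen_superset hZ hV e r hr
end

section
/- Let X be a Polish space (separable, completely metrizable) with cat_g X ≤ n. Then X can be presented as the inverse limit of a sequence of ANR spaces each of category at most n: there exist a sequence (L_j)_{j∈ℕ} of metrizable spaces, each a metric ANR with cat_g L_j ≤ n, and continuous maps q_{j+1} : L_{j+1} → L_j, such that X is homeomorphic to the inverse limit space {(x_j) ∈ Π_{j∈ℕ} L_j : q_{j+1}(x_{j+1}) = x_j for all j}, with the subspace topology of the product. -/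
universe u v

/-!
Embed the Polish space `X` in `ℝ^ℕ`, where it is a `G_δ` set `⋂ V k`, and let `A i` be `n + 1` sets
covering `X` and contractible in `X`. For any open `O ⊇ X` the contraction of `A i` in `X`, viewed
as a homotopy into `O`, can be approximated by one defined on a neighbourhood of `A i`: by local
convexity and a partition of unity, the approximation stays so close that the two are joined by
segments inside `O`. Hence `A i` has an open neighbourhood `U i` contractible in `O`. Iterating with
`O = ⋃ i, U k i`, and intersecting with `V k`, gives open sets `O k` decreasing to `X` such that
`O (k + 1)` is the union of `n + 1` open sets contractible in `O k`.

Coning off these sets turns `O (k + 1)` into a space `L (k + 1)` of category at most `n`, realised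
as an open subset of `ℝ^ℕ × ℝ^(n + 1)`, hence an ANR. The contractions extend the inclusion
`O (k + 1) ⊆ O k` to a map `L (k + 1) → O k`, so the sequences `O k` and `L k` interleave and have
the same inverse limit, namely `X`.
-/

open Set Filter Topology TopologicalSpace
open scoped unitInterval

section CompleteRange

variable {X Y : Type*} [TopologicalSpace Y] {f : X → Y}

theorem cauchy_comap_nhds_iff [UniformSpace X] {y : Y} :
    Cauchy (comap f (𝓝 y)) ↔
      y ∈ closure (range f) ∧ ∀ W ∈ uniformity X, ∃ t ∈ 𝓝 y, (f ⁻¹' t) ×ˢ (f ⁻¹' t) ⊆ W := by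
  rw [cauchy_iff, comap_neBot_iff_frequently, mem_closure_iff_frequently]
  refine and_congr_right fun _ => forall₂_congr fun W _ => ?_
  constructor
  · rintro ⟨s, ⟨t, ht, hts⟩, hsW⟩
    exact ⟨t, ht, (prod_mono hts hts).trans hsW⟩
  · rintro ⟨t, ht, htW⟩
    exact ⟨f ⁻¹' t, preimage_mem_comap ht, htW⟩

theorem isGδ_setOf_cauchy_comap_nhds [UniformSpace X] [(uniformity X).IsCountablyGenerated]
    [PerfectlyNormalSpace Y] : IsGδ {y | Cauchy (comap f (𝓝 y))} := by
  obtain ⟨W, hW⟩ := (uniformity X).exists_antitone_basis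
  have hset : {y | Cauchy (comap f (𝓝 y))} =
      closure (range f) ∩ ⋂ k, {y | ∃ t ∈ 𝓝 y, (f ⁻¹' t) ×ˢ (f ⁻¹' t) ⊆ W k} := by
    ext y
    simp only [mem_ofPred_eq, mem_inter_iff, mem_iInter, cauchy_comap_nhds_iff]
    refine and_congr_right fun _ => ⟨fun h k => h _ (hW.mem k), fun h V hV => ?_⟩
    obtain ⟨k, hk⟩ := hW.mem_iff.1 hV
    obtain ⟨t, ht, htW⟩ := h k
    exact ⟨t, ht, htW.trans hk⟩
  rw [hset]
  refine isClosed_closure.isGδ.inter (.iInter_of_isOpen fun k => ?_)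
  rw [isOpen_iff_eventually]
  rintro y ⟨t, ht, htW⟩
  filter_upwards [eventually_mem_nhds_iff.2 ht] with z hz
  exact ⟨t, hz, htW⟩

theorem mem_range_iff_cauchy_comap_nhds [UniformSpace X] [CompleteSpace X] [T2Space Y]
    (hf : IsInducing f) {y : Y} : y ∈ range f ↔ Cauchy (comap f (𝓝 y)) := by
  constructor
  · rintro ⟨x, rfl⟩
    exact hf.nhds_eq_comap x ▸ cauchy_nhds
  · intro hy
    have := hy.1
    obtain ⟨x, hx⟩ := CompleteSpace.complete hy
    exact ⟨x, tendsto_nhds_unique ((hf.continuous.tendsto x).mono_left hx) tendsto_comap⟩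

theorem isGδ_range_of_isInducing [TopologicalSpace X] [IsCompletelyMetrizableSpace X]
    [PerfectlyNormalSpace Y] [T2Space Y] (hf : IsInducing f) : IsGδ (range f) := by
  let := upgradeIsCompletelyMetrizable X
  have hrange : range f = {y | Cauchy (comap f (𝓝 y))} :=
    Set.ext fun _ => mem_range_iff_cauchy_comap_nhds hf
  exact hrange ▸ isGδ_setOf_cauchy_comap_nhds

theorem exists_isEmbedding_real_sequences (X : Type*) [TopologicalSpace X] [MetrizableSpace X]
    [SeparableSpace X] : ∃ f : X → ℕ → ℝ, IsEmbedding f := by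
  let := metrizableSpaceMetric X
  obtain ⟨F, hF⟩ := Metric.PiNatEmbed.exists_embedding_to_hilbert_cube (X := X)
  exact ⟨_, (IsEmbedding.piMap fun _ : ℕ => IsEmbedding.subtypeVal).comp hF⟩

end CompleteRange

section Category

variable {X Y : Type*} [TopologicalSpace X] [TopologicalSpace Y]

theorem catgSpace_le_iff {n : ℕ} :
    catgSpace X ≤ n ↔
      ∃ A : Fin (n + 1) → Set X, (∀ x, ∃ i, x ∈ A i) ∧ ∀ i, ContractibleIn (A i) := by
  refine ⟨fun h => ?_, fun ⟨A, hA, hA'⟩ => sInf_le ⟨n, rfl, A, hA, hA'⟩⟩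
  obtain ⟨_, ⟨m, rfl, A, hA, hA'⟩, hmn⟩ := sInf_lt_iff.1 (h.trans_lt <|
    ENat.natCast_lt_natCast.2 n.lt_succ_self)
  replace hmn : m < n + 1 := ENat.natCast_lt_natCast.1 hmn
  refine ⟨fun i => A (Fin.ofNat (m + 1) i), fun x => ?_, fun i => hA' _⟩
  obtain ⟨i, hi⟩ := hA x
  exact ⟨Fin.castLE (by lia) i, by simpa using hi⟩

theorem ContractibleIn.preimage {A : Set Y} (hA : ContractibleIn A) {f : C(X, Y)} {g : C(Y, X)}
    (hgf : (g.comp f).Homotopic (.id X)) : ContractibleIn (f ⁻¹' A) := by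
  obtain ⟨x, hx⟩ := (hA.comp_left (f.restrictPreimage A)).comp_right g
  exact ⟨x, (hgf.symm.comp (.refl ((ContinuousMap.id X).restrict (f ⁻¹' A)))).trans hx⟩

theorem catgSpace_le_of_homotopic_id {f : C(X, Y)} {g : C(Y, X)}
    (hgf : (g.comp f).Homotopic (.id X)) : catgSpace X ≤ catgSpace Y := by
  refine sInf_le_sInf ?_
  rintro _ ⟨m, rfl, A, hA, hA'⟩
  exact ⟨m, rfl, fun i => f ⁻¹' A i, fun x => hA (f x), fun i => (hA' i).preimage hgf⟩

theorem catgSpace_le_of_homeomorph (e : X ≃ₜ Y) : catgSpace X ≤ catgSpace Y :=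
  catgSpace_le_of_homotopic_id (f := e) (g := e.symm) (by simpa using .refl _)

end Category

theorem isMetricANR_of_isOpenEmbedding {K : Type u} {Y : Type v} [TopologicalSpace K]
    [TopologicalSpace Y] [MetrizableSpace Y] [TietzeExtension.{u, v} Y] {i : K → Y}
    (hi : IsOpenEmbedding i) : IsMetricANR K := by
  refine ⟨hi.isEmbedding.metrizableSpace, fun Z _ _ e he => ?_⟩
  obtain ⟨g, hg⟩ := ContinuousMap.exists_extension' he ⟨i, hi.continuous⟩
  replace hg (k : K) : g (e k) = i k := congrFun hg k
  let φ : K ≃ₜ range i := hi.isEmbedding.toHomeomorph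
  refine ⟨g ⁻¹' range i, hi.isOpen_range.preimage g.continuous, ?_,
    ⟨fun z => e (φ.symm ⟨g z, z.2⟩), ?_⟩, fun z => mem_range_self _, fun k hk => ?_⟩
  · rintro _ ⟨k, rfl⟩
    exact ⟨k, (hg k).symm⟩
  · exact he.continuous.comp (by fun_prop)
  · exact congrArg e (φ.symm_apply_eq.2 (Subtype.ext (hg k)))

section InverseLimit

/-- The inverse limit of a sequence of topological spaces and continuous maps, realised as the
space of threads in the product. -/
abbrev SequentialLimit {L : ℕ → Type*} [∀ j, TopologicalSpace (L j)]
    (q : ∀ j, C(L (j + 1), L j)) : Type _ :=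
  {x : ∀ j, L j // ∀ j, q j (x (j + 1)) = x j}

theorem nonempty_homeomorph_sequentialLimit_inclusion {Y : Type*} [TopologicalSpace Y]
    {O : ℕ → Set Y} (hO : ∀ j, O (j + 1) ⊆ O j) :
    Nonempty ((⋂ j, O j : Set Y) ≃ₜ
      SequentialLimit (L := fun j => O j) fun j => ContinuousMap.inclusion (hO j)) := by
  have hthread (x : SequentialLimit (L := fun j => O j) fun j => .inclusion (hO j)) (j : ℕ) :
      (x.1 j : Y) = x.1 0 := by
    induction j with
    | zero => rfl
    | succ j ih => exact (congrArg Subtype.val (x.2 j)).trans ih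
  exact ⟨{
    toFun x := ⟨fun j => ⟨x, mem_iInter.1 x.2 j⟩, fun j => rfl⟩
    invFun x := ⟨x.1 0, mem_iInter.2 fun j => hthread x j ▸ (x.1 j).2⟩
    left_inv x := rfl
    right_inv x := Subtype.ext (funext fun j => Subtype.ext (hthread x j).symm)
    continuous_invFun := .subtype_mk (continuous_subtype_val.comp
      ((continuous_apply 0).comp continuous_subtype_val)) _ }⟩

theorem nonempty_homeomorph_sequentialLimit_of_ladder {P L : ℕ → Type*}
    [∀ j, TopologicalSpace (P j)] [∀ j, TopologicalSpace (L j)]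
    {p : ∀ j, C(P (j + 1), P j)} {q : ∀ j, C(L (j + 1), L j)}
    {b : ∀ j, C(P j, L j)} {r : ∀ j, C(L (j + 1), P j)}
    (hp : ∀ j x, r j (b (j + 1) x) = p j x) (hq : ∀ j y, b j (r j y) = q j y) :
    Nonempty (SequentialLimit p ≃ₜ SequentialLimit q) :=
  ⟨{toFun x := ⟨fun j => b j (x.1 j), fun j => by rw [← hq, hp, x.2]⟩
    invFun y := ⟨fun j => r j (y.1 (j + 1)), fun j => by rw [← hp, hq, y.2]⟩
    left_inv x := Subtype.ext (funext fun j => by simp only [hp, x.2])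
    right_inv y := Subtype.ext (funext fun j => by simp only [hq, y.2])
    continuous_toFun := .subtype_mk (continuous_pi fun j =>
      (b j).continuous.comp ((continuous_apply j).comp continuous_subtype_val)) _
    continuous_invFun := .subtype_mk (continuous_pi fun j =>
      (r j).continuous.comp ((continuous_apply (j + 1)).comp continuous_subtype_val)) _ }⟩

end InverseLimit

section Contractible

variable {Y : Type*} [TopologicalSpace Y]

/-- `ContractibleWithin U O`: the set `U` is contained in `O` and contractible in the subspace `O`,
i.e. the inclusion `U ↪ O` is nullhomotopic. Bundling `U ⊆ O` lets both sets live in the same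
ambient space. -/
def ContractibleWithin (U O : Set Y) : Prop :=
  ∃ h : U ⊆ O, (ContinuousMap.inclusion h).Nullhomotopic

theorem ContractibleWithin.mono_left {U U' O : Set Y} (h : ContractibleWithin U O)
    (hU : U' ⊆ U) : ContractibleWithin U' O :=
  ⟨hU.trans h.1, h.2.comp_left (ContinuousMap.inclusion hU)⟩

end Contractible

section Coning

variable {Y ι : Type*} {U : ι → Set Y} {i : ι}

/-- The cylinder over `U i` inside `Y × (ι → ℝ)`, running in the `i`-th coordinate direction: the
other coordinates are kept negative, so that distinct cylinders meet only where all coordinates are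
negative. -/
def coneCylinder (U : ι → Set Y) (i : ι) : Set (Y × (ι → ℝ)) :=
  {p | (∀ j ≠ i, p.2 j < 0) ∧ p.1 ∈ U i}

/-- The far end of the `i`-th direction of `Y × (ι → ℝ)`: a copy of `Y`, thickened, that serves as
an open substitute for the apex of the cone over `U i` when `Y` is contractible. -/
def coneCap (Y : Type*) (i : ι) : Set (Y × (ι → ℝ)) :=
  {p | (∀ j ≠ i, p.2 j < 0) ∧ 1 < p.2 i}

/-- The union `⋃ i, U i` with every `U i` coned off, modelled by an open subset of `Y × (ι → ℝ)`
whose base is the set of points `(x, -1)`. -/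
def coneOff (U : ι → Set Y) : Set (Y × (ι → ℝ)) :=
  ⋃ i, coneCylinder U i ∪ coneCap Y i

theorem coneCylinder_subset_coneOff : coneCylinder U i ⊆ coneOff U :=
  subset_union_left.trans (subset_iUnion (fun i => coneCylinder U i ∪ coneCap Y i) i)

theorem coneCap_subset_coneOff : coneCap Y i ⊆ coneOff U :=
  subset_union_right.trans (subset_iUnion (fun i => coneCylinder U i ∪ coneCap Y i) i)

theorem mk_neg_one_mem_coneCylinder {x : Y} (hx : x ∈ U i) : (x, -1) ∈ coneCylinder U i :=
  ⟨fun _ _ => neg_one_lt_zero, hx⟩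

variable [TopologicalSpace Y]

theorem isOpen_setOf_forall_ne_lt_zero [Finite ι] (i : ι) :
    IsOpen {p : Y × (ι → ℝ) | ∀ j ≠ i, p.2 j < 0} := by
  simp only [ofPred_forall]
  exact isOpen_iInter_of_finite fun j => isOpen_iInter_of_finite fun _ =>
    isOpen_lt (by fun_prop) continuous_const

theorem isOpen_coneCylinder [Finite ι] (hU : IsOpen (U i)) : IsOpen (coneCylinder U i) :=
  (isOpen_setOf_forall_ne_lt_zero i).inter (hU.preimage continuous_fst)

theorem isOpen_coneCap [Finite ι] (i : ι) : IsOpen (coneCap Y i) :=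
  (isOpen_setOf_forall_ne_lt_zero i).inter
    (isOpen_lt continuous_const ((continuous_apply i).comp continuous_snd))

theorem isOpen_coneOff [Finite ι] (hU : ∀ i, IsOpen (U i)) : IsOpen (coneOff U) :=
  isOpen_iUnion fun i => (isOpen_coneCylinder (hU i)).union (isOpen_coneCap i)

/-- The inclusion `x ↦ (x, -1)` of `⋃ i, U i` as the base of `coneOff U`. -/
def coneOffBase (U : ι → Set Y) : C(⋃ i, U i, coneOff U) where
  toFun x := ⟨(x, -1), (mem_iUnion.1 x.2).elim fun _ hi =>
    coneCylinder_subset_coneOff (mk_neg_one_mem_coneCylinder hi)⟩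

theorem contractibleIn_cone [ContractibleSpace Y] (U : ι → Set Y) (i : ι) :
    ContractibleIn (Subtype.val ⁻¹' (coneCylinder U i ∪ coneCap Y i) : Set (coneOff U)) := by
  classical
  let v : ι → ℝ := Function.update (-1) i 2
  have hv {j : ι} (hj : j ≠ i) : v j < 0 := by simp [v, hj]
  let apex : C(Y, coneOff U) :=
    ⟨fun x => ⟨(x, v), coneCap_subset_coneOff ⟨fun _ => hv, by simp [v]⟩⟩, by fun_prop⟩
  let P : Set (coneOff U) := Subtype.val ⁻¹' (coneCylinder U i ∪ coneCap Y i)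
  have hmem (t : I) (p : P) : (p.1.1.1, AffineMap.lineMap p.1.1.2 v (t : ℝ)) ∈ coneOff U := by
    have hneg (hp : ∀ j ≠ i, p.1.1.2 j < 0) (j : ι) (hj : j ≠ i) :
        AffineMap.lineMap p.1.1.2 v (t : ℝ) j < 0 := by
      rw [AffineMap.pi_lineMap_apply]
      exact (convex_Iio (0 : ℝ)).lineMap_mem (hp j hj) (hv hj) t.2
    rcases p.2 with hp | hp
    · exact coneCylinder_subset_coneOff ⟨hneg hp.1, hp.2⟩
    · refine coneCap_subset_coneOff ⟨hneg hp.1, ?_⟩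
      change 1 < AffineMap.lineMap p.1.1.2 v (t : ℝ) i
      rw [AffineMap.pi_lineMap_apply]
      exact (convex_Ioi (1 : ℝ)).lineMap_mem hp.2 (by simp [v]) t.2
  let π : C(P, Y) := ⟨fun p => p.1.1.1, by fun_prop⟩
  let toApex : ((ContinuousMap.id _).restrict P).Homotopy (apex.comp π) :=
    { toFun := fun q => ⟨_, hmem q.1 q.2⟩
      continuous_toFun := by simp only [AffineMap.lineMap_apply_module]; fun_prop
      map_zero_left := fun p => by simp
      map_one_left := fun p => by simp [apex, π] }
  obtain ⟨y, hy⟩ := ((id_nullhomotopic Y).comp_right apex).comp_left π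
  exact ⟨y, .trans ⟨toApex⟩ hy⟩

theorem catgSpace_coneOff_le [ContractibleSpace Y] {n : ℕ} (U : Fin (n + 1) → Set Y) :
    catgSpace (coneOff U) ≤ n :=
  catgSpace_le_iff.2 ⟨fun i => Subtype.val ⁻¹' (coneCylinder U i ∪ coneCap Y i),
    fun p => let ⟨i, hi⟩ := mem_iUnion.1 p.2; ⟨i, hi⟩, contractibleIn_cone U⟩

theorem exists_extension_coneCylinder {Z : Type*} [TopologicalSpace Z] {g : C(U i, Z)}
    (hg : g.Nullhomotopic) :
    ∃ (φ : C(coneCylinder U i, Z)) (c : Z), (∀ p, p.1.2 i ≤ 0 → φ p = g ⟨p.1.1, p.2.2⟩) ∧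
      ∀ p, 1 ≤ p.1.2 i → φ p = c := by
  obtain ⟨c, ⟨F⟩⟩ := hg
  refine ⟨⟨fun p => F (projIcc 0 1 zero_le_one (p.1.2 i), ⟨p.1.1, p.2.2⟩), by fun_prop⟩, c,
    fun p hp => ?_, fun p hp => ?_⟩
  · simp only [ContinuousMap.coe_mk, projIcc_of_le_left _ hp]
    exact F.apply_zero _
  · simp only [ContinuousMap.coe_mk, projIcc_of_right_le _ hp]
    exact F.apply_one _

theorem exists_extension_coneOff [Finite ι] {Z : Type*} [TopologicalSpace Z]
    (hU : ∀ i, IsOpen (U i)) (g : C(⋃ i, U i, Z))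
    (hg : ∀ i, (g.comp (.inclusion (subset_iUnion U i))).Nullhomotopic) :
    ∃ r : C(coneOff U, Z), ∀ x, r (coneOffBase U x) = g x := by
  choose φ c hbase hcap using fun i => exists_extension_coneCylinder (hg i)
  let S : ι ⊕ ι → Set (coneOff U) :=
    Sum.elim (fun i => Subtype.val ⁻¹' coneCylinder U i) fun i => Subtype.val ⁻¹' coneCap Y i
  let ψ : ∀ k, C(S k, Z) := Sum.rec
    (fun i => (φ i).comp ⟨fun p => ⟨p.1.1, p.2⟩, by fun_prop⟩) fun i => .const _ (c i)
  have hψ : ∀ k l p (hk : p ∈ S k) (hl : p ∈ S l), ψ k ⟨p, hk⟩ = ψ l ⟨p, hl⟩ := by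
    rintro (i | i) (j | j) p hi hj <;> rcases eq_or_ne i j with rfl | hij
    · rfl
    · exact (hbase i ⟨_, hi⟩ (hj.1 i hij).le).trans (hbase j ⟨_, hj⟩ (hi.1 j hij.symm).le).symm
    · exact hcap i ⟨_, hi⟩ hj.2.le
    · exact absurd (hi.1 j hij.symm) (zero_lt_one.trans hj.2).not_gt
    · exact (hcap i ⟨_, hj⟩ hi.2.le).symm
    · exact absurd (hj.1 i hij) (zero_lt_one.trans hi.2).not_gt
    · rfl
    · exact absurd (hi.1 j hij.symm) (zero_lt_one.trans hj.2).not_gt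
  have hS (p : coneOff U) : ∃ k, S k ∈ 𝓝 p := by
    obtain ⟨i, hi | hi⟩ := mem_iUnion.1 (show p.1 ∈ coneOff U from p.2)
    · exact ⟨.inl i, ((isOpen_coneCylinder (hU i)).preimage continuous_subtype_val).mem_nhds hi⟩
    · exact ⟨.inr i, ((isOpen_coneCap i).preimage continuous_subtype_val).mem_nhds hi⟩
  refine ⟨.liftCover S ψ hψ hS, fun x => ?_⟩
  obtain ⟨i, hi⟩ := mem_iUnion.1 x.2
  have hx : coneOffBase U x ∈ S (.inl i) := mk_neg_one_mem_coneCylinder hi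
  refine (ContinuousMap.liftCover_coe (⟨_, hx⟩ : S (.inl i))).trans ?_
  exact hbase i ⟨_, hx⟩ (by simp [coneOffBase])

end Coning

section LocallyConvex

variable {E : Type*} [AddCommGroup E] [Module ℝ E]

theorem convexHull_subset_of_forall_finset {s O : Set E}
    (h : ∀ t : Finset E, ↑t ⊆ s → ∃ C, Convex ℝ C ∧ ↑t ⊆ C ∧ C ⊆ O) :
    convexHull ℝ s ⊆ O := by
  rw [convexHull_eq_union_convexHull_finite_subsets]
  refine iUnion₂_subset fun t ht => ?_
  obtain ⟨C, hC, htC, hCO⟩ := h t ht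
  exact (convexHull_min htC hC).trans hCO

/- Dugundji's trick: among finitely many points `i a` that are `δ a`-close to `z`, the one with the
largest `δ a` has all the others within `2 * δ a`. -/
theorem convexHull_image_subset_of_dist_lt {M Y : Type*} [PseudoMetricSpace M] {i : Y → M}
    {h : Y → E} {O : Set E} {C : Y → Set E} {δ : Y → ℝ} (hC : ∀ a, Convex ℝ (C a))
    (hCO : ∀ a, C a ⊆ O) (hδ : ∀ a b, dist (i b) (i a) < 2 * δ a → h b ∈ C a) (z : M) :
    convexHull ℝ (h '' {a | dist z (i a) < δ a}) ⊆ O := by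
  classical
  refine convexHull_subset_of_forall_finset fun t ht => ?_
  obtain ⟨s, hs, rfl⟩ := Finset.subset_set_image_iff.1 ht
  rcases s.eq_empty_or_nonempty with rfl | hne
  · exact ⟨∅, convex_empty, by simp, empty_subset _⟩
  obtain ⟨a, ha, hmax⟩ := s.exists_max_image δ hne
  refine ⟨C a, hC a, ?_, hCO a⟩
  rw [Finset.coe_image, image_subset_iff]
  intro b hb
  have hza : dist z (i a) < δ a := hs ha
  have hzb : dist z (i b) < δ b := hs hb
  exact hδ a b (by linarith [dist_triangle_left (i b) (i a) z, hmax b hb])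

variable [TopologicalSpace E] [IsTopologicalAddGroup E] [ContinuousSMul ℝ E]

theorem exists_approximate_extension [LocallyConvexSpace ℝ E] {M Y : Type*} [TopologicalSpace M]
    [PseudoMetrizableSpace M] [TopologicalSpace Y] {i : Y → M} (hi : IsInducing i) {O : Set E}
    (hO : IsOpen O) (h : C(Y, O)) :
    ∃ (N : Set M) (hN : ∀ y, i y ∈ N) (g : C(N, O)), IsOpen N ∧
      ∀ y, segment ℝ (h y : E) (g ⟨i y, hN y⟩) ⊆ O := by
  let := pseudoMetrizableSpacePseudoMetric M
  have hconv (y : Y) : ∃ C ∈ 𝓝 (h y : E), Convex ℝ C ∧ C ⊆ O := by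
    obtain ⟨C, ⟨hC, hconv⟩, hCO⟩ := (LocallyConvexSpace.convex_basis (𝕜 := ℝ) (h y : E)).mem_iff.1
      (hO.mem_nhds (h y).2)
    exact ⟨C, hC, hconv, hCO⟩
  choose C hCmem hC hCO using hconv
  have hball (y : Y) : ∃ δ > 0, ∀ b, dist (i b) (i y) < 2 * δ → (h b : E) ∈ C y := by
    have hCy : ∀ᶠ b in 𝓝 y, (h b : E) ∈ C y :=
      (continuous_subtype_val.comp h.continuous).continuousAt.eventually_mem (hCmem y)
    rw [hi.nhds_eq_comap, Metric.nhds_basis_ball.comap i |>.eventually_iff] at hCy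
    obtain ⟨ε, hε, hball⟩ := hCy
    exact ⟨ε / 2, by positivity, fun b hb => hball (by simpa [mul_div_cancel₀] using hb)⟩
  choose δ hδ hδC using hball
  let T (z : M) : Set E := convexHull ℝ ((fun y => (h y : E)) '' {a | dist z (i a) < δ a})
  have hTO (z : M) : T z ⊆ O := convexHull_image_subset_of_dist_lt hC hCO hδC z
  let N : Set M := ⋃ y, Metric.ball (i y) (δ y)
  have hN (y : Y) : i y ∈ N := mem_iUnion.2 ⟨y, Metric.mem_ball_self (hδ y)⟩
  obtain ⟨g, hg⟩ := exists_continuous_forall_mem_convex_of_local_const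
    (t := fun z : N => T z) (fun z => convex_convexHull ℝ _) fun z => by
      obtain ⟨y, hy⟩ := mem_iUnion.1 z.2
      refine ⟨h y, ?_⟩
      filter_upwards [(Metric.isOpen_ball.preimage continuous_subtype_val).mem_nhds hy] with w hw
      exact subset_convexHull ℝ _ ⟨y, hw, rfl⟩
  refine ⟨N, hN, ⟨fun z => ⟨g z, hTO z (hg z)⟩, by fun_prop⟩,
    isOpen_iUnion fun _ => Metric.isOpen_ball, fun y => ?_⟩
  have hy : (h y : E) ∈ T (i y) := subset_convexHull ℝ _ ⟨y, by simp [hδ y], rfl⟩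
  exact ((convex_convexHull ℝ _).segment_subset hy (hg ⟨i y, hN y⟩)).trans (hTO _)

theorem homotopic_of_forall_segment_subset {Y : Type*} [TopologicalSpace Y] {S : Set E}
    {f g : C(Y, S)} (h : ∀ y, segment ℝ (f y : E) (g y) ⊆ S) : f.Homotopic g :=
  ⟨{toFun := fun p => ⟨AffineMap.lineMap (f p.2 : E) (g p.2 : E) (p.1 : ℝ),
      h p.2 (lineMap_mem_segment _ _ _ p.1.2)⟩
    continuous_toFun := by simp only [AffineMap.lineMap_apply_module]; fun_prop
    map_zero_left := fun y => by simp
    map_one_left := fun y => by simp }⟩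

theorem isOpen_setOf_segment_subset_s12 {Y : Type*} [TopologicalSpace Y] {f g : Y → E} {O : Set E}
    (hf : Continuous f) (hg : Continuous g) (hO : IsOpen O) :
    IsOpen {y | segment ℝ (f y) (g y) ⊆ O} := by
  simp only [segment_eq_image_lineMap, image_subset_iff]
  rw [isOpen_iff_eventually]
  intro y hy
  refine isCompact_Icc.eventually_forall_of_forall_eventually fun t ht => ?_
  have hcont : Continuous fun p : Y × ℝ => AffineMap.lineMap (f p.1) (g p.1) p.2 := by
    simp only [AffineMap.lineMap_apply_module]; fun_prop
  exact hcont.continuousAt.eventually (hO.mem_nhds (hy ht))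

theorem exists_approximate_homotopy_extension [LocallyConvexSpace ℝ E] {M Y : Type*}
    [TopologicalSpace M] [PseudoMetrizableSpace M] [TopologicalSpace Y] {i : Y → M}
    (hi : IsInducing i) {O : Set E} (hO : IsOpen O) {h₀ h₁ : C(Y, O)} (h : h₀.Homotopic h₁) :
    ∃ (W : Set M) (hW : ∀ y, i y ∈ W) (g₀ g₁ : C(W, O)), IsOpen W ∧ g₀.Homotopic g₁ ∧
      (∀ y, segment ℝ (h₀ y : E) (g₀ ⟨i y, hW y⟩) ⊆ O) ∧
      ∀ y, segment ℝ (h₁ y : E) (g₁ ⟨i y, hW y⟩) ⊆ O := by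
  obtain ⟨F⟩ := h
  obtain ⟨N, hN, G, hNo, hseg⟩ := exists_approximate_extension
    ((IsInducing.id (X := I)).prodMap hi) hO F.toContinuousMap
  let W : Set M := {x | ∀ t : I, (t, x) ∈ N}
  have hW : IsOpen W := by
    refine isOpen_iff_eventually.2 fun x hx => ?_
    have hev : ∀ᶠ x' in 𝓝 x, ∀ t ∈ (univ : Set I), (t, x') ∈ N :=
      isCompact_univ.eventually_forall_of_forall_eventually fun t _ =>
        (hNo.preimage continuous_swap).mem_nhds (hx t)
    exact hev.mono fun x' hx' t => hx' t (mem_univ t)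
  let H : C(I × W, O) := G.comp ⟨fun p => ⟨(p.1, p.2), p.2.2 p.1⟩, by fun_prop⟩
  exact ⟨W, fun y t => hN (t, y), H.curry 0, H.curry 1, hW, ⟨⟨H, fun _ => rfl, fun _ => rfl⟩⟩,
    fun y => F.apply_zero y ▸ hseg (0, y), fun y => F.apply_one y ▸ hseg (1, y)⟩

theorem exists_isOpen_contractibleWithin [LocallyConvexSpace ℝ E] [PseudoMetrizableSpace E]
    {Y : Type*} [TopologicalSpace Y] {O : Set E} (hO : IsOpen O) {f : C(Y, O)} (hf : IsInducing f)
    (hnull : f.Nullhomotopic) :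
    ∃ U, IsOpen U ∧ (∀ y, (f y : E) ∈ U) ∧ ContractibleWithin U O := by
  obtain ⟨c, hc⟩ := hnull
  obtain ⟨W, hfW, g₀, g₁, hW, hg, hseg₀, hseg₁⟩ :=
    exists_approximate_homotopy_extension (IsInducing.subtypeVal.comp hf) hO hc
  let U : Set W := {x | segment ℝ (x : E) (g₀ x) ⊆ O} ∩ {x | segment ℝ (c : E) (g₁ x) ⊆ O}
  have hU : IsOpen U :=
    (isOpen_setOf_segment_subset_s12 (by fun_prop) (by fun_prop) hO).inter
      (isOpen_setOf_segment_subset_s12 (by fun_prop) (by fun_prop) hO)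
  have hUW (x : Subtype.val '' U) : ∃ hx : (x : E) ∈ W, ⟨x, hx⟩ ∈ U := by
    obtain ⟨_, x, hx, rfl⟩ := x
    exact ⟨x.2, hx⟩
  choose hxW hxU using hUW
  let e : C(Subtype.val '' U, W) := ⟨fun x => ⟨x, hxW x⟩, by fun_prop⟩
  have hUO : Subtype.val '' U ⊆ O := fun x hx => (hxU ⟨x, hx⟩).1 (left_mem_segment ℝ _ _)
  refine ⟨Subtype.val '' U, hW.isOpenMap_subtype_val _ hU,
    fun y => ⟨⟨f y, hfW y⟩, ⟨hseg₀ y, hseg₁ y⟩, rfl⟩, hUO, c, ?_⟩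
  have hincl : (ContinuousMap.inclusion hUO).Homotopic (g₀.comp e) :=
    homotopic_of_forall_segment_subset fun x => (hxU x).1
  have hconst : (ContinuousMap.const _ c).Homotopic (g₁.comp e) :=
    homotopic_of_forall_segment_subset fun x => (hxU x).2
  exact (hincl.trans (hg.comp (.refl e))).trans hconst.symm

theorem exists_isOpen_cover_contractibleWithin [LocallyConvexSpace ℝ E] [PseudoMetrizableSpace E]
    {X ι : Type*} [TopologicalSpace X] {f : X → E} (hf : IsInducing f) {A : ι → Set X}
    (hA : ∀ x, ∃ i, x ∈ A i) (hcontr : ∀ i, ContractibleIn (A i)) {O V : Set E} (hO : IsOpen O)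
    (hfO : range f ⊆ O) (hV : IsOpen V) (hfV : range f ⊆ V) :
    ∃ U : ι → Set E, (∀ i, IsOpen (U i)) ∧ range f ⊆ ⋃ i, U i ∧ (∀ i, U i ⊆ V) ∧
      ∀ i, ContractibleWithin (U i) O := by
  let fO : C(X, O) := ⟨fun x => ⟨f x, hfO (mem_range_self x)⟩, hf.continuous.subtype_mk _⟩
  have hfA (i : ι) : IsInducing (fO.restrict (A i)) :=
    (hf.codRestrict fun x => hfO (mem_range_self x)).comp .subtypeVal
  choose U hU hAU hUO using fun i =>
    exists_isOpen_contractibleWithin hO (hfA i) ((hcontr i).comp_right fO)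
  refine ⟨fun i => U i ∩ V, fun i => (hU i).inter hV, ?_, fun i => inter_subset_right,
    fun i => (hUO i).mono_left inter_subset_left⟩
  rintro _ ⟨x, rfl⟩
  obtain ⟨i, hi⟩ := hA x
  exact mem_iUnion.2 ⟨i, hAU i ⟨x, hi⟩, hfV (mem_range_self x)⟩

theorem exists_seq_contractibleWithin [LocallyConvexSpace ℝ E] [PseudoMetrizableSpace E]
    {X ι : Type*} [TopologicalSpace X] {f : X → E} (hf : IsInducing f) (hGδ : IsGδ (range f))
    {A : ι → Set X} (hA : ∀ x, ∃ i, x ∈ A i) (hcontr : ∀ i, ContractibleIn (A i)) :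
    ∃ U : ℕ → ι → Set E, (∀ k i, IsOpen (U k i)) ∧ range f = ⋂ k, ⋃ i, U k i ∧
      ∀ k i, ContractibleWithin (U (k + 1) i) (⋃ i, U k i) := by
  obtain ⟨V, hV, hfV⟩ := hGδ.eq_iInter_nat
  have hfV' (k : ℕ) : range f ⊆ V k := hfV ▸ iInter_subset V k
  let Cover := {U : ι → Set E // (∀ i, IsOpen (U i)) ∧ range f ⊆ ⋃ i, U i}
  have hrefine (k : ℕ) (U : Cover) :
      ∃ U' : Cover, (∀ i, U'.1 i ⊆ V k) ∧ ∀ i, ContractibleWithin (U'.1 i) (⋃ i, U.1 i) := by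
    obtain ⟨U', hU', hfU', h⟩ := exists_isOpen_cover_contractibleWithin hf hA hcontr
      (isOpen_iUnion U.2.1) U.2.2 (hV k) (hfV' k)
    exact ⟨⟨U', hU', hfU'⟩, h⟩
  choose refined hrefinedV hrefined using hrefine
  let univCover : Cover := ⟨fun _ => univ, fun _ => isOpen_univ, by
    rintro _ ⟨x, rfl⟩
    exact mem_iUnion.2 ⟨(hA x).choose, mem_univ _⟩⟩
  let U (k : ℕ) : Cover := k.rec univCover refined
  refine ⟨fun k => (U k).1, fun k => (U k).2.1, ?_, fun k => hrefined k (U k)⟩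
  refine (subset_iInter fun k => (U k).2.2).antisymm ?_
  refine (subset_iInter fun k => (iInter_subset _ (k + 1)).trans ?_).trans hfV.superset
  exact iUnion_subset (hrefinedV k (U k))

end LocallyConvex

/-- A Polish space `X` with `cat_g X ≤ n` is homeomorphic to the inverse
limit of a sequence of metric ANR spaces `L j`, each of generalized category at most `n`,
along continuous bonding maps `q j : L (j+1) → L j`. -/
theorem polish_cat_le_inverse_limit_of_ANRs {X : Type v} [TopologicalSpace X] [PolishSpace X]
    (n : ℕ) (hX : catgSpace X ≤ n) :
    ∃ (L : ℕ → Type u) (τ : ∀ j, TopologicalSpace (L j))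
      (q : ∀ j, @ContinuousMap (L (j + 1)) (L j) (τ (j + 1)) (τ j)),
      (∀ j, @IsMetricANR (L j) (τ j)) ∧
      (∀ j, @catgSpace (L j) (τ j) ≤ n) ∧
      Nonempty
        (@Homeomorph X {x : ∀ j, L j // ∀ j, (q j) (x (j + 1)) = x j} _
          (@instTopologicalSpaceSubtype (∀ j, L j) _ (@Pi.topologicalSpace ℕ L τ))) := by
  obtain ⟨A, hA, hcontr⟩ := catgSpace_le_iff.1 hX
  obtain ⟨f, hf⟩ := exists_isEmbedding_real_sequences X
  obtain ⟨U, hU, hrange, hUU⟩ := exists_seq_contractibleWithin hf.isInducing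
    (isGδ_range_of_isInducing hf.isInducing) hA hcontr
  have hanti (j : ℕ) : ⋃ i, U (j + 1) i ⊆ ⋃ i, U j i := iUnion_subset fun i => (hUU j i).1
  choose ρ hρ using fun j =>
    exists_extension_coneOff (hU (j + 1)) (.inclusion (hanti j)) fun i => (hUU j i).2
  let b j : C(⋃ i, U j i, ULift.{u} (coneOff (U j))) :=
    .comp ⟨ULift.up, continuous_uliftUp⟩ (coneOffBase (U j))
  let r j : C(ULift.{u} (coneOff (U (j + 1))), ⋃ i, U j i) :=
    (ρ j).comp ⟨ULift.down, continuous_uliftDown⟩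
  refine ⟨fun j => ULift.{u} (coneOff (U j)), inferInstance, fun j => (b j).comp (r j),
    fun j => ?_, fun j => ?_, ?_⟩
  · exact isMetricANR_of_isOpenEmbedding
      ((isOpen_coneOff (hU j)).isOpenEmbedding_subtypeVal.comp Homeomorph.ulift.isOpenEmbedding)
  · exact (catgSpace_le_of_homeomorph Homeomorph.ulift).trans (catgSpace_coneOff_le (U j))
  · obtain ⟨e⟩ := nonempty_homeomorph_sequentialLimit_inclusion (O := fun j => ⋃ i, U j i) hanti
    obtain ⟨e'⟩ := nonempty_homeomorph_sequentialLimit_of_ladder (b := b) (r := r)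
      (q := fun j => (b j).comp (r j)) hρ fun _ _ => rfl
    exact ⟨hf.toHomeomorph.trans <| (Homeomorph.setCongr hrange).trans <| e.trans e'⟩
end
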